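/- Let a, b satisfy either a, b \in (-1,\infty) with ab > 0, or a, b \in \mathbb{C} \setminus \{0\} with b = \overline{a}; let c be a positive real number with c > \mathrm{Re}(a+b) + 1, and let \alpha \in \mathbb{C} with |\alpha| < 1. If ab\,|\alpha| \cdot \frac{\Gamma(c)\Gamma(c-a-b-1)}{\Gamma(c-a)\Gamma(c-b)} \leq 1 (this quantity being a positive real number), then the Taylor coefficients b_n = \frac{\alpha}{2} \frac{(a)_n (b)_n}{(c)_n n!} of g_2(z) = (\alpha/2)(F(a,b;c;z) - 1) satisfy \sum_{n=1}^{\infty} n |b_n| \leq 1/2; consequently f_2(z) = z + \overline{(\alpha/2)(F(a,b;c;z) - 1)} is uniformly starlike in \mathbb{D}. -/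

import Mathlib

open Complex Metric ComplexConjugate

noncomputable section

/-- The Pochhammer symbol `(x)ₙ = x(x+1)⋯(x+n-1)` for `x : ℂ`. -/
def poch (x : ℂ) (n : ℕ) : ℂ := (ascPochhammer ℂ n).eval x

/-- The Gaussian hypergeometric function `F(a,b;c;z) = ∑ (a)ₙ(b)ₙ/((c)ₙ n!) zⁿ`. -/
def hypF (a b c z : ℂ) : ℂ :=
  ∑' n : ℕ, poch a n * poch b n / (poch c n * (Nat.factorial n : ℂ)) * z ^ n

/-- The analytic condition (due to Kanas–Ponnusamy–Sairam) characterizing uniform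
starlikeness used in the paper, taken here as the formal definition of
"`h + conj g` is uniformly starlike in `𝔻`". -/
def UniformlyStarlikeOnDisk (h g : ℂ → ℂ) : Prop :=
  (h 0 + conj (g 0) = 0) ∧
  (∀ z ∈ ball (0:ℂ) 1, ‖deriv g z‖ < ‖deriv h z‖) ∧
  (∀ z ∈ ball (0:ℂ) 1, ∀ ζ ∈ ball (0:ℂ) 1, z ≠ ζ →
    0 ≤ (((h z + conj (g z)) - (h ζ + conj (g ζ)))
        / ((z - ζ) * deriv h z - conj (z - ζ) * conj (deriv g z))).re) ∧
  (∀ z ∈ ball (0:ℂ) 1, z ≠ 0 →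
    0 < ((h z + conj (g z))
        / (z * deriv h z - conj z * conj (deriv g z))).re)

/-- The Taylor coefficient `bₙ = (α/2) (a)ₙ(b)ₙ/((c)ₙ n!)` of
`g₂(z) = (α/2)(F(a,b;c;z) - 1)`. -/
def bc2 (a b c α : ℂ) (n : ℕ) : ℂ :=
  α / 2 * (poch a n * poch b n) / (poch c n * (Nat.factorial n : ℂ))

/-- Real form of the terms of the hypergeometric series at `1`, in terms of
`s = A + B` and `P = A * B`. -/
def tt (s P C : ℝ) : ℕ → ℝ
  | 0 => 1
  | n + 1 => tt s P C n * ((n:ℝ) ^ 2 + s * n + P) / ((C + n) * (n + 1))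

lemma tt_nonneg {s P C : ℝ} (hC : 0 < C) (hp : ∀ n : ℕ, 0 ≤ (n:ℝ) ^ 2 + s * n + P) (n : ℕ) :
    0 ≤ tt s P C n := by
  induction n with
  | zero => simp [tt]
  | succ k ih =>
    rw [tt]
    have := hp k
    positivity

lemma tt_shift {s P C : ℝ} (hC : 0 < C) (n : ℕ) :
    tt s P (C + 1) n * (C + n) = tt s P C n * C := by
  induction n with
  | zero => simp [tt]
  | succ k ih =>
    have e : tt s P (C + 1) k = tt s P C k * C / (C + k) := by
      rw [← ih]; field_simp
    rw [tt, tt, e]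
    have h1 : C + k ≠ 0 := by positivity
    have h2 : C + 1 + k ≠ 0 := by positivity
    push_cast
    field_simp
    ring

lemma tt_tele {s P C : ℝ} (hC : 0 < C) (N : ℕ) :
    C * (C - s) * ∑ n ∈ Finset.range N, tt s P C n =
      (C ^ 2 - s * C + P) * ∑ n ∈ Finset.range N, tt s P (C + 1) n - C * N * tt s P C N := by
  induction N with
  | zero => simp
  | succ k ih =>
    rw [Finset.sum_range_succ, Finset.sum_range_succ, mul_add, ih, mul_add]
    have e : tt s P (C + 1) k = tt s P C k * C / (C + k) := by
      rw [← tt_shift hC k]; field_simp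
    rw [e, tt]
    have h1 : C + k ≠ 0 := by positivity
    push_cast
    field_simp
    ring

lemma tt_step {s P C : ℝ} (hC : 0 < C) (hCs : s < C) (hp : ∀ n : ℕ, 0 ≤ (n:ℝ) ^ 2 + s * n + P)
    (N : ℕ) :
    ∑ n ∈ Finset.range N, tt s P C n ≤
      (C ^ 2 - s * C + P) / (C * (C - s)) * ∑ n ∈ Finset.range N, tt s P (C + 1) n := by
  have h := tt_tele (s := s) (P := P) hC N
  have h0 := tt_nonneg hC hp N
  have h1 : 0 < C * (C - s) := mul_pos hC (by linarith)
  rw [div_mul_eq_mul_div, le_div_iff₀ h1]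
  have : 0 ≤ C * N * tt s P C N := by positivity
  linarith

lemma tt_iter {s P C : ℝ} (hC : 0 < C) (hCs : s < C) (hp : ∀ n : ℕ, 0 ≤ (n:ℝ) ^ 2 + s * n + P)
    (N m : ℕ) :
    ∑ n ∈ Finset.range N, tt s P C n ≤
      (∏ k ∈ Finset.range m, ((C + k) ^ 2 - s * (C + k) + P) / ((C + k) * (C + k - s))) *
        ∑ n ∈ Finset.range N, tt s P (C + m) n := by
  induction m with
  | zero => simp
  | succ m ih =>
    refine ih.trans ?_
    have hm : (0:ℝ) ≤ m := by positivity
    have h := tt_step (C := C + m) (s := s) (P := P) (by linarith) (by linarith) hp N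
    rw [Finset.prod_range_succ, mul_assoc]
    push_cast
    rw [← add_assoc]
    refine mul_le_mul_of_nonneg_left h ?_
    refine Finset.prod_nonneg fun k _ => ?_
    have hk : (0:ℝ) ≤ k := by positivity
    have h1 : 0 < (C + k) * (C + k - s) := mul_pos (by linarith) (by linarith)
    have hP := hp 0
    simp at hP
    refine div_nonneg ?_ h1.le
    nlinarith

lemma tt_lim (s P C : ℝ) (n : ℕ) :
    Filter.Tendsto (fun m : ℕ => tt s P (C + m) (n + 1)) Filter.atTop (nhds 0) := by
  have base : ∀ n : ℕ, Filter.Tendsto (fun m : ℕ => (C + m + n : ℝ)) Filter.atTop Filter.atTop := by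
    intro n
    exact Filter.tendsto_atTop_add_const_right _ _
      (Filter.tendsto_atTop_add_const_left _ _ tendsto_natCast_atTop_atTop)
  have key : ∀ (n : ℕ) (l : ℝ), Filter.Tendsto (fun m : ℕ => tt s P (C + m) n) Filter.atTop (nhds l) →
      Filter.Tendsto (fun m : ℕ => tt s P (C + m) (n + 1)) Filter.atTop (nhds 0) := by
    intro n l hl
    have h2 := (hl.mul_const (((n:ℝ) ^ 2 + s * n + P) / (n + 1))).mul (base n).inv_tendsto_atTop
    rw [mul_zero] at h2
    refine h2.congr fun m => ?_
    simp only [tt, Pi.inv_apply]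
    rw [div_eq_mul_inv, div_eq_mul_inv, mul_inv]
    ring
  induction n with
  | zero => exact key 0 1 (by simp [tt])
  | succ k ih => exact key _ _ ih

lemma tt_sum_lim (s P C : ℝ) (N : ℕ) :
    Filter.Tendsto (fun m : ℕ => ∑ n ∈ Finset.range (N + 1), tt s P (C + m) n)
      Filter.atTop (nhds 1) := by
  simp_rw [Finset.sum_range_succ']
  have h := (tendsto_finsetSum (Finset.range N) (fun n _ => tt_lim s P C n)).add_const 1
  simpa [tt] using h

lemma gamma_prod_lim (A B C : ℂ) (hA : Complex.Gamma (C - A) ≠ 0) (hB : Complex.Gamma (C - B) ≠ 0) :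
    Filter.Tendsto (fun m : ℕ => ∏ k ∈ Finset.range (m + 1),
      ((C - A + k) * (C - B + k)) / ((C + k) * (C - A - B + k))) Filter.atTop
      (nhds (Complex.Gamma C * Complex.Gamma (C - A - B) /
        (Complex.Gamma (C - A) * Complex.Gamma (C - B)))) := by
  have h := ((Complex.GammaSeq_tendsto_Gamma C).mul
    (Complex.GammaSeq_tendsto_Gamma (C - A - B))).div
    ((Complex.GammaSeq_tendsto_Gamma (C - A)).mul
    (Complex.GammaSeq_tendsto_Gamma (C - B))) (mul_ne_zero hA hB)
  refine h.congr' ?_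
  filter_upwards [Filter.eventually_ge_atTop 1] with m hm
  have hm0 : (m:ℂ) ≠ 0 := by exact_mod_cast (by omega : m ≠ 0)
  have hf : (m.factorial : ℂ) ≠ 0 := by exact_mod_cast m.factorial_ne_zero
  simp only [Pi.div_apply, Pi.mul_apply, Complex.GammaSeq]
  rw [Finset.prod_div_distrib, Finset.prod_mul_distrib, Finset.prod_mul_distrib]
  have e : (m:ℂ) ^ C * (m:ℂ) ^ (C - A - B) = (m:ℂ) ^ (C - A) * (m:ℂ) ^ (C - B) := by
    rw [← Complex.cpow_add _ _ hm0, ← Complex.cpow_add _ _ hm0]; ring_nf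
  have n1 : (m:ℂ) ^ (C - A) ≠ 0 := by simp [Complex.cpow_eq_zero_iff, hm0]
  have n2 : (m:ℂ) ^ (C - B) ≠ 0 := by simp [Complex.cpow_eq_zero_iff, hm0]
  rw [div_mul_div_comm, div_mul_div_comm, div_div_div_eq]
  rw [show (m:ℂ) ^ C * m.factorial * ((m:ℂ) ^ (C - A - B) * m.factorial) =
    (m:ℂ) ^ (C - A) * m.factorial * ((m:ℂ) ^ (C - B) * m.factorial) by
      linear_combination (m.factorial:ℂ) ^ 2 * e]
  rw [mul_comm ((∏ _ ∈ _, _) * _) (_ * _ : ℂ)]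
  exact mul_div_mul_left _ _ (by positivity)

/-- Gauss bound: partial sums are bounded by the Gauss value. -/
lemma gauss_bound (A B C : ℂ) (s P c' : ℝ) (hs : A + B = s) (hP : A * B = P) (hC' : C = c')
    (hC : 0 < c') (hCs : s < c') (hp : ∀ n : ℕ, 0 ≤ (n:ℝ) ^ 2 + s * n + P)
    (hA : Complex.Gamma (C - A) ≠ 0) (hB : Complex.Gamma (C - B) ≠ 0)
    (G : ℝ) (hG : (G:ℂ) = Complex.Gamma C * Complex.Gamma (C - A - B) /
        (Complex.Gamma (C - A) * Complex.Gamma (C - B))) (N : ℕ) :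
    ∑ n ∈ Finset.range N, tt s P c' n ≤ G := by
  have h1 := gamma_prod_lim A B C hA hB
  rw [← hG] at h1
  have h2 : Filter.Tendsto (fun m : ℕ => ∏ k ∈ Finset.range (m + 1),
      ((c' + k) ^ 2 - s * (c' + k) + P) / ((c' + k) * (c' + k - s))) Filter.atTop (nhds G) := by
    rw [← Filter.tendsto_ofReal_iff]
    refine h1.congr fun m => ?_
    push_cast
    refine Finset.prod_congr rfl fun k _ => ?_
    rw [← hs, ← hP, hC']
    congr 1 <;> ring
  have h3 := h2.mul ((tt_sum_lim s P c' N).comp (Filter.tendsto_add_atTop_nat 1))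
  rw [mul_one] at h3
  have h4 : ∑ n ∈ Finset.range (N + 1), tt s P c' n ≤ G :=
    ge_of_tendsto' h3 fun m => tt_iter hC hCs hp (N + 1) (m + 1)
  rw [Finset.sum_range_succ] at h4
  have := tt_nonneg hC hp N
  linarith

lemma poch_succ (x : ℂ) (n : ℕ) : poch x (n + 1) = poch x n * (x + n) := by
  simp [poch, ascPochhammer_succ_eval]

lemma coef_eq (a b : ℂ) (c s p : ℝ) (hc : 0 < c) (hs : a + b = s) (hp : a * b = p) (n : ℕ) :
    ((n:ℂ) + 1) * (poch a (n + 1) * poch b (n + 1) / (poch c (n + 1) * (Nat.factorial (n + 1) : ℂ)))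
      = ((p / c * tt (s + 2) (p + s + 1) (c + 1) n : ℝ) : ℂ) := by
  have hpc : ∀ n : ℕ, poch c n ≠ 0 := by
    intro n
    induction n with
    | zero => simp [poch]
    | succ k ih =>
      rw [poch_succ]
      refine mul_ne_zero ih ?_
      have : c + k ≠ 0 := by positivity
      exact_mod_cast this
  have hf : ∀ n : ℕ, (Nat.factorial n : ℂ) ≠ 0 := fun n => by exact_mod_cast n.factorial_ne_zero
  have hc0 : (c:ℂ) ≠ 0 := by exact_mod_cast hc.ne'
  induction n with
  | zero =>
    simp [poch, tt, hp]
  | succ k ih =>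
    have h1 : (c:ℂ) + (k + 1) ≠ 0 := by
      have : c + (k + 1) ≠ 0 := by positivity
      exact_mod_cast this
    have h2 : (k:ℂ) + 1 ≠ 0 := by exact_mod_cast k.succ_ne_zero
    have h3 : (k:ℂ) + 1 + 1 ≠ 0 := by exact_mod_cast (k+1).succ_ne_zero
    rw [poch_succ a (k+1), poch_succ b (k+1), poch_succ c (k+1), Nat.factorial_succ (k+1), tt]
    have e : (((p / c * (tt (s + 2) (p + s + 1) (c + 1) k * ((k:ℝ) ^ 2 + (s + 2) * k + (p + s + 1)) /
      ((c + 1 + k) * (k + 1))) : ℝ)) : ℂ) =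
      ((p / c * tt (s + 2) (p + s + 1) (c + 1) k : ℝ) : ℂ) *
        ((a + (k + 1)) * (b + (k + 1)) / ((c + (k + 1)) * (k + 1))) := by
      push_cast
      rw [← hs, ← hp]
      have h1' : (c:ℂ) + 1 + k ≠ 0 := by convert h1 using 1; ring
      field_simp
      ring
    rw [e, ← ih]
    have := hpc (k+1)
    have := hf (k+1)
    push_cast
    field_simp

lemma re_div_pos_aux (u v : ℂ) (hu : ‖u - 1‖ ≤ 1 / 2) (hv : ‖v - 1‖ ≤ 1 / 2) : 0 < (u / v).re := by
  have key : ∀ w : ℂ, ‖w - 1‖ ≤ 1 / 2 → 1 / 2 ≤ w.re ∧ w.im ^ 2 ≤ w.re ^ 2 / 3 := by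
    intro w hw
    have h1 : ‖w - 1‖ ^ 2 ≤ 1 / 4 := by nlinarith [norm_nonneg (w - 1)]
    rw [← Complex.normSq_eq_norm_sq, Complex.normSq_apply] at h1
    simp at h1
    constructor
    · nlinarith [sq_nonneg w.im]
    · nlinarith [sq_nonneg (4 * w.re - 3)]
  obtain ⟨u1, u2⟩ := key u hu
  obtain ⟨v1, v2⟩ := key v hv
  have hv0 : v ≠ 0 := by
    rintro rfl
    simp at v1
    norm_num at v1
  have hpos : 0 < Complex.normSq v := Complex.normSq_pos.2 hv0
  rw [Complex.div_re, ← add_div]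
  refine div_pos ?_ hpos
  have h : (u.im * v.im) ^ 2 ≤ (u.re * v.re / 3) ^ 2 := by
    calc (u.im * v.im) ^ 2 = u.im ^ 2 * v.im ^ 2 := by ring
      _ ≤ (u.re ^ 2 / 3) * (v.re ^ 2 / 3) := by
        apply mul_le_mul u2 v2 (sq_nonneg _) (by positivity)
      _ = _ := by ring
  have hp : 0 < u.re * v.re := by
    apply mul_pos <;> linarith
  have := (abs_le_of_sq_le_sq' h (by positivity)).1
  linarith

lemma starlike_of_deriv (g : ℂ → ℂ) (h0 : g 0 = 0)
    (hd : ∀ z ∈ ball (0:ℂ) 1, DifferentiableAt ℂ g z)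
    (hb : ∀ z ∈ ball (0:ℂ) 1, ‖deriv g z‖ ≤ 1 / 2) :
    UniformlyStarlikeOnDisk (fun z => z) g := by
  have key : ∀ z ∈ ball (0:ℂ) 1, ∀ ζ ∈ ball (0:ℂ) 1, z ≠ ζ →
    0 < (((z + conj (g z)) - (ζ + conj (g ζ)))
        / ((z - ζ) * 1 - conj (z - ζ) * conj (deriv g z))).re := by
    intro z hz ζ hζ hne
    have hL := Convex.norm_image_sub_le_of_norm_deriv_le hd hb (convex_ball _ _) hζ hz
    have hw : z - ζ ≠ 0 := sub_ne_zero.2 hne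
    have hwn : 0 < ‖z - ζ‖ := norm_pos_iff.2 hw
    rw [← div_div_div_cancel_right₀ hw]
    apply re_div_pos_aux
    · have : ((z + conj (g z)) - (ζ + conj (g ζ))) / (z - ζ) - 1 = conj (g z - g ζ) / (z - ζ) := by
        rw [map_sub]; field_simp; ring
      rw [this, norm_div, RCLike.norm_conj, div_le_iff₀ hwn]
      exact hL
    · have : ((z - ζ) * 1 - conj (z - ζ) * conj (deriv g z)) / (z - ζ) - 1 =
          - (conj ((z - ζ) * deriv g z) / (z - ζ)) := by
        rw [map_mul]; field_simp; ring
      rw [this, norm_neg, norm_div, RCLike.norm_conj, div_le_iff₀ hwn, norm_mul, mul_comm]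
      exact mul_le_mul_of_nonneg_right (hb z hz) hwn.le
  have hid : ∀ z : ℂ, deriv (fun z : ℂ => z) z = 1 := fun z => deriv_id z
  refine ⟨by simp [h0], ?_, ?_, ?_⟩
  · intro z hz
    rw [hid, norm_one]
    linarith [hb z hz]
  · intro z hz ζ hζ hne
    rw [hid]
    exact (key z hz ζ hζ hne).le
  · intro z hz hne
    rw [hid]
    simpa [h0] using key z hz 0 (by simp) hne

lemma series_deriv (f : ℕ → ℂ) (hf : Summable fun n : ℕ => ((n + 1 : ℝ)) * ‖f (n + 1)‖)
    (hle : (∑' n : ℕ, ((n + 1 : ℝ)) * ‖f (n + 1)‖) ≤ 1 / 2) :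
    ∀ z ∈ ball (0:ℂ) 1, DifferentiableAt ℂ (fun z => ∑' n : ℕ, f n * z ^ n) z ∧
      ‖deriv (fun z => ∑' n : ℕ, f n * z ^ n) z‖ ≤ 1 / 2 := by
  intro z hz
  have hu : Summable fun n : ℕ => (n:ℝ) * ‖f n‖ := by
    rw [← summable_nat_add_iff 1]
    simpa using hf
  have hbd : ∀ (n : ℕ) (y : ℂ), y ∈ ball (0:ℂ) 1 → ‖f n * (n * y ^ (n - 1))‖ ≤ (n:ℝ) * ‖f n‖ := by
    intro n y hy
    have hy1 : ‖y‖ ≤ 1 := by simpa using (mem_ball_zero_iff.1 hy).le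
    rw [norm_mul, norm_mul, norm_pow, Complex.norm_natCast, mul_comm ‖f n‖]
    refine mul_le_mul_of_nonneg_right ?_ (norm_nonneg _)
    exact mul_le_of_le_one_right (by positivity) (pow_le_one₀ (norm_nonneg _) hy1)
  have hder := hasDerivAt_tsum_of_isPreconnected (g := fun n z => f n * z ^ n)
    (g' := fun n z => f n * (n * z ^ (n - 1))) (y₀ := 0) hu isOpen_ball
    (convex_ball (0:ℂ) 1).isPreconnected
    (fun n y _ => (hasDerivAt_pow n y).const_mul (f n)) hbd (by simp)
    (by
      refine summable_of_ne_finset_zero (s := {0}) fun n hn => ?_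
      have : n ≠ 0 := by simpa using hn
      simp [this]) hz
  refine ⟨hder.differentiableAt, ?_⟩
  rw [hder.deriv]
  refine (tsum_of_norm_bounded hu.hasSum fun n => hbd n z hz).trans ?_
  rw [hu.tsum_eq_zero_add]
  simpa using hle

/-- Theorem 5(b): under the stated conditions on `a, b, c, α`, the
coefficients of `g₂(z) = (α/2)(F(a,b;c;z) - 1)` satisfy `∑_{n≥1} n|bₙ| ≤ 1/2`;
consequently `f₂(z) = z + conj(g₂(z))` is uniformly starlike in `𝔻`. -/
theorem hypergeom_uniformly_starlike_b (a b : ℂ)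
    (hab : (∃ a' b' : ℝ, a = (a' : ℂ) ∧ b = (b' : ℂ) ∧ -1 < a' ∧ -1 < b' ∧ 0 < a' * b') ∨
           (a ≠ 0 ∧ b ≠ 0 ∧ b = conj a))
    (c : ℝ) (hc : 0 < c) (hc1 : (a + b).re + 1 < c)
    (α : ℂ) (hα : ‖α‖ < 1)
    (hQ : ∃ q : ℝ, 0 < q ∧ q ≤ 1 ∧
      (q : ℂ) = a * b * (‖α‖ : ℂ) * (Complex.Gamma (c : ℂ)
          * Complex.Gamma ((c : ℂ) - a - b - 1)
          / (Complex.Gamma ((c : ℂ) - a) * Complex.Gamma ((c : ℂ) - b)))) :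
    (Summable fun n : ℕ => ((n + 1 : ℝ)) * ‖bc2 a b (c : ℂ) α (n + 1)‖) ∧
    (∑' n : ℕ, ((n + 1 : ℝ)) * ‖bc2 a b (c : ℂ) α (n + 1)‖) ≤ 1 / 2 ∧
    UniformlyStarlikeOnDisk (fun z => z)
      (fun z => α / 2 * (hypF a b (c : ℂ) z - 1)) := by
  obtain ⟨s, p, hs, hp, hp0, hpos, hra, hrb⟩ : ∃ s p : ℝ, a + b = s ∧ a * b = p ∧ 0 < p ∧
      (∀ n : ℕ, 0 ≤ (n:ℝ) ^ 2 + (s + 2) * n + (p + s + 1)) ∧ 0 < ((c:ℂ) - a).re ∧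
      0 < ((c:ℂ) - b).re := by
    rcases hab with ⟨a', b', rfl, rfl, ha, hb, hab⟩ | ⟨ha, hb, rfl⟩
    · simp at hc1
      refine ⟨a' + b', a' * b', by simp, by simp, hab, fun n => ?_, ?_, ?_⟩
      · have hn : (0:ℝ) ≤ n := by positivity
        have : 0 ≤ (a' + 1 + n) * (b' + 1 + n) := by
          apply mul_nonneg <;> linarith
        linarith
      · simp; linarith
      · simp; linarith
    · simp at hc1
      refine ⟨2 * a.re, Complex.normSq a, ?_, Complex.mul_conj a, Complex.normSq_pos.2 ha,
        fun n => ?_, ?_, ?_⟩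
      · rw [Complex.add_conj]
      · rw [Complex.normSq_apply]
        nlinarith [sq_nonneg ((n:ℝ) + 1 + a.re), sq_nonneg a.im]
      · simp; by_contra! h; linarith
      · simp; by_contra! h; linarith
  obtain ⟨q, hq0, hq1, hq⟩ := hQ
  have hsc : s + 1 < c := by
    rw [hs] at hc1; simpa using hc1
  have hGa := Complex.Gamma_ne_zero_of_re_pos hra
  have hGb := Complex.Gamma_ne_zero_of_re_pos hrb
  have hα0 : ‖α‖ ≠ 0 := by
    intro h
    rw [h] at hq
    simp at hq
    exact hq0.ne' hq
  have hαpos : 0 < ‖α‖ := lt_of_le_of_ne (norm_nonneg _) (Ne.symm hα0)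
  have hc0 : (c:ℂ) ≠ 0 := by exact_mod_cast hc.ne'
  -- the Gauss value
  have hsub1 : (c + 1 : ℂ) - (a + 1) = c - a := by ring
  have hsub2 : (c + 1 : ℂ) - (b + 1) = c - b := by ring
  have hsub3 : (c : ℂ) - a - (b + 1) = c - a - b - 1 := by ring
  have hbound : ∀ N : ℕ, ∑ n ∈ Finset.range N, tt (s + 2) (p + s + 1) (c + 1) n ≤
      q * c / (p * ‖α‖) := by
    refine gauss_bound (a + 1) (b + 1) (c + 1) (s + 2) (p + s + 1) (c + 1) ?_ ?_ ?_ (by linarith)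
      (by linarith) hpos ?_ ?_ _ ?_
    · push_cast; rw [← hs]; ring
    · push_cast; rw [← hs, ← hp]; ring
    · push_cast; ring
    · rwa [hsub1]
    · rwa [hsub2]
    · rw [hsub1, hsub2, hsub3, Complex.Gamma_add_one _ hc0]
      push_cast
      rw [hq, hp]
      have h1 : (p:ℂ) ≠ 0 := by exact_mod_cast hp0.ne'
      have h2 : (‖α‖:ℂ) ≠ 0 := by exact_mod_cast hα0
      field_simp
  have hterm : ∀ n : ℕ, ((n + 1 : ℝ)) * ‖bc2 a b (c : ℂ) α (n + 1)‖ =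
      ‖α‖ / 2 * (p / c) * tt (s + 2) (p + s + 1) (c + 1) n := by
    intro n
    have ht := tt_nonneg (by linarith : 0 < c + 1) hpos n
    have e := coef_eq a b c s p hc hs hp n
    have e2 : ((n:ℂ) + 1) * bc2 a b (c:ℂ) α (n + 1) =
        α / 2 * ((p / c * tt (s + 2) (p + s + 1) (c + 1) n : ℝ) : ℂ) := by
      rw [← e, bc2]; ring
    have e3 := congrArg norm e2
    rw [norm_mul, norm_mul, Complex.norm_real, Real.norm_of_nonneg (by positivity)] at e3
    have e4 : ‖(n:ℂ) + 1‖ = (n:ℝ) + 1 := by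
      rw [← Nat.cast_succ, Complex.norm_natCast]; push_cast; ring
    rw [e4] at e3
    rw [e3, norm_div]
    simp
    ring
  have hle : ∀ N : ℕ, ∑ n ∈ Finset.range N, ((n + 1 : ℝ)) * ‖bc2 a b (c : ℂ) α (n + 1)‖ ≤ 1 / 2 := by
    intro N
    simp_rw [hterm]
    rw [← Finset.mul_sum]
    calc _ ≤ ‖α‖ / 2 * (p / c) * (q * c / (p * ‖α‖)) :=
          mul_le_mul_of_nonneg_left (hbound N) (by positivity)
      _ = q / 2 := by field_simp
      _ ≤ 1 / 2 := by linarith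
  have hsum : Summable fun n : ℕ => ((n + 1 : ℝ)) * ‖bc2 a b (c : ℂ) α (n + 1)‖ :=
    summable_of_sum_range_le (fun n => by positivity) hle
  have htsum : (∑' n : ℕ, ((n + 1 : ℝ)) * ‖bc2 a b (c : ℂ) α (n + 1)‖) ≤ 1 / 2 :=
    Real.tsum_le_of_sum_range_le (fun n => by positivity) hle
  refine ⟨hsum, htsum, ?_⟩
  have hser := series_deriv (bc2 a b (c:ℂ) α) hsum htsum
  have hg : (fun z => α / 2 * (hypF a b (c : ℂ) z - 1)) =
      fun z => (∑' n : ℕ, bc2 a b (c:ℂ) α n * z ^ n) - α / 2 := by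
    funext z
    rw [mul_sub, mul_one, hypF, ← tsum_mul_left]
    congr 1
    refine tsum_congr fun n => ?_
    rw [bc2]; ring
  rw [hg]
  refine starlike_of_deriv _ ?_ ?_ ?_
  · rw [tsum_eq_single 0 (fun n hn => by simp [hn])]
    simp [bc2, poch]
  · intro z hz
    exact (hser z hz).1.sub_const _
  · intro z hz
    rw [deriv_sub_const]
    exact (hser z hz).2
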